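/- Let ν ≥ 0 be a real number and define J_ν : (0,∞) → ℝ by J_ν(z) = (z/2)^ν · Σ_{n≥0} (−z²/4)ⁿ/(n!·Γ(ν + n + 1)), where Γ is the real Gamma function. Then J_ν is twice differentiable on (0,∞) and satisfies Bessel's equation z²·J_ν''(z) + z·J_ν'(z) + (z² − ν²)·J_ν(z) = 0 for all z > 0. -/

import Mathlib

noncomputable def bc (μ : ℝ) (n : ℕ) : ℝ := 1 / ((n.factorial : ℝ) * Real.Gamma (μ + (n : ℝ) + 1))

noncomputable def bF (μ x : ℝ) : ℝ := ∑' n : ℕ, bc μ n * x ^ n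

noncomputable def bA (μ z : ℝ) : ℝ := (z / 2) ^ μ * bF μ (-z ^ 2 / 4)

lemma gamma_pos_aux {μ : ℝ} (hμ : 0 ≤ μ) (n : ℕ) : 0 < Real.Gamma (μ + (n : ℝ) + 1) :=
  Real.Gamma_pos_of_pos (by positivity)

lemma bc_nonneg {μ : ℝ} (hμ : 0 ≤ μ) (n : ℕ) : 0 ≤ bc μ n := by
  have := gamma_pos_aux hμ n
  unfold bc; positivity

lemma gamma_mono_aux {μ : ℝ} (hμ : 0 ≤ μ) (n : ℕ) (hn : 1 ≤ n) :
    Real.Gamma (μ + 2) ≤ Real.Gamma (μ + (n : ℝ) + 1) := by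
  induction n, hn using Nat.le_induction with
  | base => apply le_of_eq; congr 1; push_cast; ring
  | succ n hn ih =>
    have h := gamma_pos_aux hμ n
    have e : μ + ((n + 1 : ℕ) : ℝ) + 1 = (μ + n + 1) + 1 := by push_cast; ring
    rw [e, Real.Gamma_add_one (by positivity)]
    have : (0 : ℝ) ≤ n := by positivity
    nlinarith

lemma bc_summable {μ : ℝ} (hμ : 0 ≤ μ) (x : ℝ) : Summable (fun n => bc μ n * x ^ n) := by
  rw [← summable_nat_add_iff 1]
  have hs := ((summable_nat_add_iff 1).2 (Real.summable_pow_div_factorial |x|)).mul_left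
    (1 / Real.Gamma (μ + 2))
  refine Summable.of_norm_bounded hs (fun n => ?_)
  have h1 := gamma_mono_aux hμ (n + 1) (by omega)
  have h0 : 0 < Real.Gamma (μ + 2) := Real.Gamma_pos_of_pos (by positivity)
  rw [norm_mul, norm_pow, Real.norm_eq_abs, Real.norm_eq_abs, abs_of_nonneg (bc_nonneg hμ _)]
  have h2 : bc μ (n + 1) ≤ 1 / Real.Gamma (μ + 2) * (1 / ((n + 1).factorial : ℝ)) := by
    unfold bc
    rw [← one_div_mul_one_div, mul_comm]
    gcongr
  calc _ ≤ 1 / Real.Gamma (μ + 2) * (1 / ((n + 1).factorial : ℝ)) * |x| ^ (n + 1) := by gcongr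
    _ = _ := by ring

lemma bc_succ (μ : ℝ) (n : ℕ) : bc μ (n + 1) * ((n : ℝ) + 1) = bc (μ + 1) n := by
  unfold bc
  have e : μ + ((n + 1 : ℕ) : ℝ) + 1 = μ + 1 + n + 1 := by push_cast; ring
  rw [e, Nat.factorial_succ]
  push_cast
  have : (n : ℝ) + 1 ≠ 0 := by positivity
  rw [one_div, one_div, mul_assoc, mul_inv]
  field_simp

lemma bc_rec {μ : ℝ} (hμ : 0 ≤ μ) (n : ℕ) : bc μ n = (μ + n + 1) * bc (μ + 1) n := by
  unfold bc
  have e : μ + 1 + (n : ℝ) + 1 = (μ + n + 1) + 1 := by ring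
  have hp : μ + n + 1 ≠ 0 := by positivity
  have := (gamma_pos_aux hμ n).ne'
  rw [e, Real.Gamma_add_one hp]
  field_simp

lemma bF_hasDerivAt {μ : ℝ} (hμ : 0 ≤ μ) (x : ℝ) : HasDerivAt (bF μ) (bF (μ + 1) x) x := by
  have hμ1 : 0 ≤ μ + 1 := by positivity
  have key : ∀ y : ℝ, (fun n : ℕ => bc μ (n + 1) * (((n + 1 : ℕ) : ℝ) * y ^ (n + 1 - 1)))
      = fun n => bc (μ + 1) n * y ^ n := by
    intro y; funext n
    rw [← bc_succ]; push_cast; ring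
  have hs : ∀ y : ℝ, Summable (fun n : ℕ => bc μ n * ((n : ℝ) * y ^ (n - 1))) := by
    intro y
    rw [← summable_nat_add_iff 1, key y]
    exact bc_summable hμ1 y
  have hd := hasDerivAt_tsum_of_isPreconnected (hs (|x| + 1)) Metric.isOpen_ball
    (convex_ball (0 : ℝ) (|x| + 1)).isPreconnected
    (g := fun n y => bc μ n * y ^ n) (g' := fun n y => bc μ n * ((n : ℝ) * y ^ (n - 1)))
    (y₀ := x) (y := x)
    (fun n y _ => (hasDerivAt_pow n y).const_mul _)
    (fun n y hy => by
      have hy' : |y| ≤ |x| + 1 := by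
        rw [Metric.mem_ball, dist_zero_right, Real.norm_eq_abs] at hy; exact hy.le
      have := bc_nonneg hμ n
      rw [norm_mul, norm_mul, norm_pow, Real.norm_eq_abs, Real.norm_eq_abs, Real.norm_eq_abs,
        abs_of_nonneg this, Nat.abs_cast]
      gcongr)
    (by simp) (bc_summable hμ x) (by simp)
  refine HasDerivAt.congr_deriv (f := bF μ) hd ?_
  rw [(hs x).tsum_eq_zero_add]
  simp only [key x]
  simp [bF]

lemma bF_rec {μ : ℝ} (hμ : 0 ≤ μ) (x : ℝ) :
    bF μ x = (μ + 1) * bF (μ + 1) x + x * bF (μ + 1 + 1) x := by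
  have h1 := bc_summable (μ := μ + 1) (by positivity) x
  have h2 := bc_summable (μ := μ + 1 + 1) (by positivity) x
  have key : (fun n : ℕ => ((n + 1 : ℕ) : ℝ) * (bc (μ + 1) (n + 1) * x ^ (n + 1)))
      = fun n => x * (bc (μ + 1 + 1) n * x ^ n) := by
    funext n
    rw [← bc_succ (μ + 1)]; push_cast; ring
  have hs : Summable (fun n : ℕ => (n : ℝ) * (bc (μ + 1) n * x ^ n)) := by
    rw [← summable_nat_add_iff 1, key]
    exact h2.mul_left x
  have h3 : ∑' n : ℕ, (n : ℝ) * (bc (μ + 1) n * x ^ n) = x * bF (μ + 1 + 1) x := by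
    rw [hs.tsum_eq_zero_add]
    simp only [key, tsum_mul_left, bF]
    simp
  rw [← h3]
  unfold bF
  rw [← tsum_mul_left, ← (h1.mul_left _).tsum_add hs]
  congr 1; funext n
  rw [bc_rec hμ]; ring

lemma bA_hasDerivAt {μ : ℝ} (hμ : 0 ≤ μ) {z : ℝ} (hz : 0 < z) :
    HasDerivAt (bA μ) (μ / z * bA μ z - bA (μ + 1) z) z := by
  have h1 : HasDerivAt (fun z : ℝ => -z ^ 2 / 4) (-z / 2) z := by
    have := ((hasDerivAt_pow 2 z).neg).div_const 4
    refine HasDerivAt.congr_deriv (f := fun z : ℝ => -z ^ 2 / 4) this ?_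
    push_cast; ring
  have h2 := (bF_hasDerivAt hμ (-z ^ 2 / 4)).comp z h1
  have h3 : HasDerivAt (fun z : ℝ => z / 2) (1 / 2) z := (hasDerivAt_id z).div_const 2
  have hz2 : 0 < z / 2 := by positivity
  have h4 := h3.rpow_const (p := μ) (Or.inl hz2.ne')
  have h5 := h4.mul h2
  refine HasDerivAt.congr_deriv (f := bA μ) h5 ?_
  unfold bA
  simp only [Function.comp]
  rw [Real.rpow_add_one hz2.ne', Real.rpow_sub_one hz2.ne']
  field_simp
  ring

lemma bA_rec {μ : ℝ} (hμ : 0 ≤ μ) {z : ℝ} (hz : 0 < z) :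
    z * (bA μ z + bA (μ + 1 + 1) z) = 2 * (μ + 1) * bA (μ + 1) z := by
  have hz2 : 0 < z / 2 := by positivity
  unfold bA
  rw [bF_rec hμ, Real.rpow_add_one hz2.ne', Real.rpow_add_one hz2.ne']
  ring

/-- For real `ν ≥ 0`, the Bessel function of the first kind
`J_ν(z) = (z/2)^ν · Σ_{n≥0} (-z²/4)ⁿ/(n!·Γ(ν+n+1))` is twice differentiable on `(0,∞)`
and satisfies Bessel's equation `z²J'' + zJ' + (z² - ν²)J = 0` there. -/
theorem besselJ_solves_bessel_equation
    (ν : ℝ) (hν : 0 ≤ ν) (J : ℝ → ℝ)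
    (hJ : ∀ z > (0 : ℝ), J z = (z / 2) ^ ν *
      ∑' n : ℕ, (-z ^ 2 / 4) ^ n / ((n.factorial : ℝ) * Real.Gamma (ν + (n : ℝ) + 1))) :
    (∀ z > (0 : ℝ), DifferentiableAt ℝ J z ∧ DifferentiableAt ℝ (deriv J) z) ∧
      ∀ z > (0 : ℝ),
        z ^ 2 * deriv (deriv J) z + z * deriv J z + (z ^ 2 - ν ^ 2) * J z = 0 := by
  have hJA : ∀ z > (0 : ℝ), J z = bA ν z := by
    intro z hz
    rw [hJ z hz]
    unfold bA bF bc
    congr 2; funext n; ring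
  have hν1 : 0 ≤ ν + 1 := by positivity
  have hd1 : ∀ z > (0 : ℝ), HasDerivAt J (ν / z * bA ν z - bA (ν + 1) z) z := by
    intro z hz
    refine (bA_hasDerivAt hν hz).congr_of_eventuallyEq ?_
    filter_upwards [lt_mem_nhds hz] with y hy using hJA y hy
  have hd2 : ∀ z > (0 : ℝ), HasDerivAt (deriv J)
      ((-ν / z ^ 2) * bA ν z + ν / z * (ν / z * bA ν z - bA (ν + 1) z)
        - ((ν + 1) / z * bA (ν + 1) z - bA (ν + 1 + 1) z)) z := by
    intro z hz
    have h0 : HasDerivAt (fun z : ℝ => ν / z) (-ν / z ^ 2) z := by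
      have := (hasDerivAt_inv hz.ne').const_mul ν
      refine HasDerivAt.congr_deriv (f := fun z : ℝ => ν / z) this ?_
      ring
    have h := (h0.mul (bA_hasDerivAt hν hz)).sub (bA_hasDerivAt hν1 hz)
    refine h.congr_of_eventuallyEq ?_
    filter_upwards [lt_mem_nhds hz] with y hy using (hd1 y hy).deriv
  refine ⟨fun z hz => ⟨(hd1 z hz).differentiableAt, (hd2 z hz).differentiableAt⟩, fun z hz => ?_⟩
  rw [(hd1 z hz).deriv, (hd2 z hz).deriv, hJA z hz]
  have h := bA_rec hν hz
  have hz' : z ≠ 0 := hz.ne'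
  field_simp
  linear_combination z * h
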